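/- For each integer n ≥ 2, let λ_n be the largest real root of the polynomial t^{4n} − 2t^{2n+1} − 2t^{2n−1} + 1 (such a root exists and satisfies λ_n > 1). Then lim_{n→∞} (4n + 2) · log λ_n = 2 · log(2 + √3). -/

import Mathlib

open Filter

/-- The clique polynomial `t^{4n} - 2t^{2n+1} - 2t^{2n-1} + 1` of the fibered class
`(2, 2n-1)₀`, as a real function. -/
noncomputable def Pfun (n : ℕ) (t : ℝ) : ℝ :=
  t ^ (4 * n) - 2 * t ^ (2 * n + 1) - 2 * t ^ (2 * n - 1) + 1

theorem Pfun_eq (n : ℕ) (hn : 2 ≤ n) (t : ℝ) (ht : 0 < t) :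
    Pfun n t = (t ^ (2 * n)) ^ 2 - 2 * (t + t⁻¹) * t ^ (2 * n) + 1 := by
  obtain ⟨m, rfl⟩ : ∃ m, n = m + 1 := ⟨n - 1, by omega⟩
  unfold Pfun
  have h : 2 * (m + 1) - 1 = 2 * m + 1 := by omega
  rw [h]
  field_simp
  ring

theorem Pfun_pos (n : ℕ) (hn : 2 ≤ n) (t : ℝ) (ht : 2 ≤ t) : 0 < Pfun n t := by
  rw [Pfun_eq n hn t (by linarith)]
  have h1 : t ^ 4 ≤ t ^ (2 * n) := pow_le_pow_right₀ (by linarith) (by omega)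
  have h2 : t⁻¹ ≤ 1 := inv_le_one_of_one_le₀ (by linarith)
  have h3 : 8 * t ≤ t ^ 4 := by
    have : (2:ℝ) ^ 3 ≤ t ^ 3 := by gcongr
    nlinarith
  have h4 : 2 * (t + t⁻¹) ≤ t ^ (2 * n) := by linarith
  have h5 : 0 < t ^ (2 * n) := by positivity
  nlinarith

theorem Pfun_ex (n : ℕ) (hn : 2 ≤ n) :
    ∃ L : ℝ, 1 < L ∧ Pfun n L = 0 ∧ ∀ r : ℝ, Pfun n r = 0 → r ≤ L := by
  have hc : Continuous (Pfun n) := by unfold Pfun; fun_prop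
  have h1 : Pfun n 1 = -2 := by unfold Pfun; norm_num
  have h2 := Pfun_pos n hn 2 le_rfl
  obtain ⟨c, hc1, hc2⟩ := intermediate_value_Icc (by norm_num : (1:ℝ) ≤ 2) hc.continuousOn
    (show (0:ℝ) ∈ Set.Icc (Pfun n 1) (Pfun n 2) from ⟨by rw [h1]; norm_num, h2.le⟩)
  have hK : IsCompact (Set.Icc (1:ℝ) 2 ∩ {t | Pfun n t = 0}) :=
    isCompact_Icc.inter_right (isClosed_eq hc continuous_const)
  obtain ⟨L, ⟨hL1, hL2⟩, hL3⟩ := hK.exists_isGreatest ⟨c, hc1, hc2⟩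
  have hL2 : Pfun n L = 0 := hL2
  refine ⟨L, lt_of_le_of_ne hL1.1 ?_, hL2, ?_⟩
  · rintro rfl
    linarith
  · intro r hr
    by_cases h : r < 1
    · linarith [hL1.1]
    · refine hL3 ⟨⟨not_lt.1 h, ?_⟩, hr⟩
      by_contra h'
      linarith [Pfun_pos n hn r (by linarith)]

theorem Pfun_root (n : ℕ) (hn : 2 ≤ n) (t : ℝ) (ht : 1 < t) (h : Pfun n t = 0) :
    t ^ (2 * n) = (t + t⁻¹) + Real.sqrt ((t + t⁻¹) ^ 2 - 1) ∧ t - 1 ≤ 5 / (n : ℝ) := by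
  have h2 : t < 2 := by
    by_contra h'
    linarith [Pfun_pos n hn t (by linarith)]
  rw [Pfun_eq n hn t (by linarith)] at h
  have hx : 1 < t ^ (2 * n) := one_lt_pow₀ ht (by omega)
  have hB := one_add_mul_le_pow (show (-2:ℝ) ≤ t - 1 by linarith) (2 * n)
  rw [add_sub_cancel] at hB
  push_cast at hB
  have hi : t⁻¹ < 1 := inv_lt_one_of_one_lt₀ ht
  have hs : 1 < t + t⁻¹ := by have : 0 < t⁻¹ := by positivity
                              linarith
  generalize t ^ (2 * n) = x at *
  have hn' : (0:ℝ) < n := by positivity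
  constructor
  · have : Real.sqrt ((t + t⁻¹) ^ 2 - 1) = x - (t + t⁻¹) := by
      rw [show (t + t⁻¹) ^ 2 - 1 = (x - (t + t⁻¹)) ^ 2 by linarith]
      apply Real.sqrt_sq
      nlinarith
    linarith
  · have hx6 : x ≤ 6 := by nlinarith
    rw [le_div_iff₀ hn']
    nlinarith

theorem stmt15 :
    (∀ n : ℕ, 2 ≤ n →
      ∃ L : ℝ, 1 < L ∧ Pfun n L = 0 ∧ ∀ r : ℝ, Pfun n r = 0 → r ≤ L) ∧
    ∀ lam : ℕ → ℝ,
      (∀ n : ℕ, 2 ≤ n → Pfun n (lam n) = 0 ∧ ∀ r : ℝ, Pfun n r = 0 → r ≤ lam n) →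
      Tendsto (fun n : ℕ => (4 * (n : ℝ) + 2) * Real.log (lam n)) atTop
        (nhds (2 * Real.log (2 + Real.sqrt 3))) := by
  refine ⟨Pfun_ex, fun lam hlam => ?_⟩
  have h1 : ∀ n, 2 ≤ n → 1 < lam n := fun n hn => by
    obtain ⟨L, hL, hL0, -⟩ := Pfun_ex n hn
    exact hL.trans_le ((hlam n hn).2 L hL0)
  have hl : Tendsto lam atTop (nhds 1) := by
    have hu : Tendsto (fun n : ℕ => 1 + 5 / (n : ℝ)) atTop (nhds 1) := by
      simpa using (tendsto_const_div_atTop_nhds_zero_nat (5:ℝ)).const_add 1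
    refine tendsto_of_tendsto_of_tendsto_of_le_of_le' tendsto_const_nhds hu ?_ ?_
    · filter_upwards [eventually_ge_atTop 2] with n hn using (h1 n hn).le
    · filter_upwards [eventually_ge_atTop 2] with n hn
      linarith [(Pfun_root n hn _ (h1 n hn) (hlam n hn).1).2]
  have hF : ContinuousAt (fun t : ℝ => 2 * Real.log ((t + t⁻¹) + Real.sqrt ((t + t⁻¹) ^ 2 - 1))
      + 2 * Real.log t) 1 := by
    have hi : ContinuousAt (fun t : ℝ => t⁻¹) 1 := continuousAt_inv₀ one_ne_zero
    have hs : ContinuousAt (fun t : ℝ => t + t⁻¹) 1 := continuousAt_id.add hi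
    have hq : ContinuousAt (fun t : ℝ => (t + t⁻¹) + Real.sqrt ((t + t⁻¹) ^ 2 - 1)) 1 :=
      hs.add (((hs.pow 2).sub continuousAt_const).sqrt)
    refine (continuousAt_const.mul (hq.log ?_)).add
      (continuousAt_const.mul (continuousAt_id.log one_ne_zero))
    positivity
  have hT := hF.tendsto.comp hl
  have he : (2 * Real.log (((1:ℝ) + (1:ℝ)⁻¹) + Real.sqrt (((1:ℝ) + (1:ℝ)⁻¹) ^ 2 - 1))
      + 2 * Real.log 1) = 2 * Real.log (2 + Real.sqrt 3) := by
    norm_num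
  rw [he] at hT
  refine hT.congr' ?_
  filter_upwards [eventually_ge_atTop 2] with n hn
  simp only [Function.comp]
  rw [← (Pfun_root n hn _ (h1 n hn) (hlam n hn).1).1, Real.log_pow]
  push_cast
  ring
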